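/- arXiv:2309.12949 — 3 statements merged into one kernel-verified Lean document; each statement's English description precedes it below -/
import Mathlib

section
/- (Proposition 4, exact clustering.) Let ℬ : {1,…,n} → {1,…,r} be a block structure with r blocks of equal size d ≥ 2 (n = r·d), with indicator matrix B ∈ ℝ^{n×n}. Let B̃ ∈ ℝ^{n×n} be any symmetric matrix with ‖B̃ − B‖₂ < √(2d)/8, and let Ũ ∈ ℝ^{n×r} be a matrix whose columns form an orthonormal family of eigenvectors of B̃ associated with its r largest eigenvalues (counted with multiplicity). Then the greedy K-means procedure with threshold 1/√(2d) applied to the rows ũ_1,…,ũ_n of Ũ outputs a labeling ℬ̂ : {1,…,n} → ℕ that induces exactly the same partition of {1,…,n} as ℬ (i.e. ℬ̂(i) = ℬ̂(j) if and only if ℬ(i) = ℬ(j)). -/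
open Matrix

/-- The spectral norm (largest singular value) of a real matrix, as the operator norm of
the induced map between Euclidean spaces. -/
noncomputable def specNorm {m n : ℕ} (A : Matrix (Fin m) (Fin n) ℝ) : ℝ :=
  ‖(Matrix.toEuclideanLin.trans LinearMap.toContinuousLinearMap) A‖

/-- Euclidean distance between two vectors of `ℝ^r`. -/
noncomputable def eDist {r : ℕ} (v w : Fin r → ℝ) : ℝ :=
  Real.sqrt (∑ k, (v k - w k) ^ 2)

/-- The labels produced by the first `j` steps of the greedy K-means procedure with
threshold `t` on the stream of points `u 0, u 1, …` in `ℝ^r`.  `greedyKMeans r u t j`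
is the list of labels (natural numbers, created in order `0, 1, 2, …`) assigned to the
points `u 0, …, u (j-1)`.  At each step, the centroid of a cluster is the mean of the
points assigned to it so far; the new point is assigned to the cluster of its nearest
centroid if that distance is `< t`, and otherwise starts a new cluster. -/
noncomputable def greedyKMeans (r : ℕ) (u : ℕ → Fin r → ℝ) (t : ℝ) : ℕ → List ℕ
  | 0 => []
  | j + 1 =>
    let prev := greedyKMeans r u t j
    -- number of clusters created so far
    let K := prev.foldr (fun a b => max (a + 1) b) 0
    -- current centroid of cluster `q`: the mean of the points assigned to it so far
    let ctr : ℕ → Fin r → ℝ := fun q =>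
      let idxs := (List.range j).filter fun i => prev.getD i 0 = q
      ((idxs.length : ℝ))⁻¹ • (idxs.map u).sum
    let lab : ℕ :=
      match (List.range K).argmin fun q => eDist (u j) (ctr q) with
      | none => K
      | some best => if eDist (u j) (ctr best) < t then best else K
    prev ++ [lab]


section spectral
variable {H : Type*} [NormedAddCommGroup H] [InnerProductSpace ℝ H] [FiniteDimensional ℝ H]

/-- The quadratic form on the orthogonal complement is bounded by each top eigenvalue. -/
theorem aux_quad_le {ι : Type*} (T : H →ₗ[ℝ] H) (hT : T.IsSymmetric) (u : ι → H) (lam : ι → ℝ)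
    (heig : ∀ q, T (u q) = lam q • u q) (c : ℝ)
    (htop : ∀ (v : H) (a : ℝ), v ≠ 0 → T v = a • v → (∀ q, inner ℝ (u q) v = 0) → a ≤ c)
    (y : H) (hy : ∀ q, inner ℝ (u q) y = 0) : inner ℝ y (T y) ≤ c * ‖y‖ ^ 2 := by
  let W : Submodule ℝ H :=
    { carrier := {v | ∀ q, inner ℝ (u q) v = 0}
      add_mem' := by
        intro a b ha hb q
        rw [inner_add_right, ha q, hb q, add_zero]
      zero_mem' := by intro q; simp
      smul_mem' := by
        intro a b hb q
        rw [inner_smul_right, hb q, mul_zero] }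
  have hW : ∀ v ∈ W, T v ∈ W := by
    intro v hv q
    rw [← hT, heig, inner_smul_left, hv q, mul_zero]
  have hS : (T.restrict hW).IsSymmetric := hT.restrict_invariant hW
  let b := hS.eigenvectorBasis rfl
  have hb : ∀ i, hS.eigenvalues rfl i ≤ c := by
    intro i
    refine htop (b i : H) (hS.eigenvalues rfl i) ?_ ?_ (b i).2
    · intro h
      have h1 : b i = 0 := Subtype.ext h
      have := b.orthonormal.1 i
      rw [h1] at this
      simp at this
    · have := hS.apply_eigenvectorBasis rfl i
      have h2 := congrArg (Subtype.val) this
      simpa [LinearMap.restrict_apply] using h2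
  let y' : W := ⟨y, hy⟩
  have h1 : inner ℝ y (T y) = inner ℝ y' (T.restrict hW y') := rfl
  have h2 : ‖y‖ = ‖y'‖ := rfl
  rw [h1, h2, ← b.sum_inner_mul_inner, ← b.sum_sq_norm_inner_right y', Finset.mul_sum]
  refine Finset.sum_le_sum fun i _ => ?_
  have h3 : inner ℝ (b i) (T.restrict hW y') = hS.eigenvalues rfl i * inner ℝ (b i) y' := by
    rw [← hS, hS.apply_eigenvectorBasis, inner_smul_left]; simp [b]
  rw [h3, real_inner_comm (b i) y', Real.norm_eq_abs, sq_abs]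
  nlinarith [hb i, sq_nonneg (inner ℝ (b i) y' : ℝ)]

/-- Lower bound on the top eigenvalues. -/
theorem aux_lam_ge {r : ℕ} (T S : H →ₗ[ℝ] H) (hT : T.IsSymmetric) (u f : Fin r → H)
    (hu : Orthonormal ℝ u) (hf : Orthonormal ℝ f) (lam : Fin r → ℝ)
    (heig : ∀ q, T (u q) = lam q • u q)
    (htop : ∀ (v : H) (a : ℝ), v ≠ 0 → T v = a • v → (∀ q, inner ℝ (u q) v = 0) →
      ∀ q, a ≤ lam q)
    (d ε : ℝ) (hS : ∀ k, S (f k) = d • f k) (hE : ∀ x, ‖T x - S x‖ ≤ ε * ‖x‖) (q : Fin r) :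
    d - ε ≤ lam q := by
  -- the linear map a ↦ (p ↦ ⟪u p, Σ a_k f_k⟫) off q
  let L : (Fin r → ℝ) →ₗ[ℝ] ({p : Fin r // p ≠ q} → ℝ) :=
    { toFun := fun a p => inner ℝ (u p) (∑ k, a k • f k)
      map_add' := by
        intro a b; ext p
        simp [add_smul, Finset.sum_add_distrib, inner_add_right]
      map_smul' := by
        intro c a; ext p
        simp [mul_smul, ← Finset.smul_sum, inner_smul_right] }
  obtain ⟨a, ha0, ha⟩ : ∃ a, a ≠ 0 ∧ L a = 0 := by
    have hlt : Module.finrank ℝ ({p : Fin r // p ≠ q} → ℝ) < Module.finrank ℝ (Fin r → ℝ) := by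
      simp only [Module.finrank_fintype_fun_eq_card]
      exact Fintype.card_subtype_lt (x := q) (by simp)
    have h := LinearMap.ker_ne_bot_of_finrank_lt (f := L) hlt
    obtain ⟨a, ha, h0⟩ := (Submodule.ne_bot_iff _).1 h
    exact ⟨a, h0, ha⟩
  set x := ∑ k, a k • f k with hx
  have hxp : ∀ p, p ≠ q → inner ℝ (u p) x = 0 := fun p hp => congrFun ha ⟨p, hp⟩
  have hx0 : x ≠ 0 := by
    intro h
    apply ha0
    funext k
    exact Fintype.linearIndependent_iff.1 hf.linearIndependent a h k
  have hSx : S x = d • x := by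
    rw [hx, map_sum, Finset.smul_sum]
    refine Finset.sum_congr rfl fun k _ => ?_
    rw [map_smul, hS, smul_comm]
  have hlow : (d - ε) * ‖x‖ ^ 2 ≤ inner ℝ x (T x) := by
    have h1 : inner ℝ x (T x) = inner ℝ x (T x - S x) + d * ‖x‖ ^ 2 := by
      rw [inner_sub_right, hSx, inner_smul_right, real_inner_self_eq_norm_sq]; ring
    have h2 := abs_le.1 (abs_real_inner_le_norm x (T x - S x))
    have h3 := mul_le_mul_of_nonneg_left (hE x) (norm_nonneg x)
    rw [h1]
    nlinarith [h2.1]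
  set c : ℝ := inner ℝ (u q) x with hc
  set y := x - c • u q with hy
  have huu : ∀ p, inner ℝ (u p) (u q) = if p = q then (1 : ℝ) else 0 := fun p =>
    (orthonormal_iff_ite.1 hu p q)
  have hyp : ∀ p, inner ℝ (u p) y = 0 := by
    intro p
    rw [hy, inner_sub_right, inner_smul_right, huu]
    by_cases h : p = q
    · subst h; simp [hc]
    · simp [h, hxp p h]
  have hup := aux_quad_le T hT u lam heig (lam q) (fun v a h1 h2 h3 => htop v a h1 h2 h3 q) y hyp
  have hxy : x = c • u q + y := by rw [hy]; abel
  have hyq := hyp q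
  have hyq' : inner ℝ y (u q) = 0 := by rw [real_inner_comm]; exact hyq
  have hqT : inner ℝ (u q) (T y) = 0 := by
    rw [← hT, heig, inner_smul_left, hyq, mul_zero]
  have hqq : inner ℝ (u q) (u q) = (1 : ℝ) := by rw [huu, if_pos rfl]
  have hTx : inner ℝ x (T x) = lam q * c ^ 2 + inner ℝ y (T y) := by
    rw [hxy, map_add, map_smul, heig]
    simp only [inner_add_left, inner_add_right, real_inner_smul_left, inner_smul_right, hqT, hyq',
      hqq]
    ring
  have hnx : ‖x‖ ^ 2 = c ^ 2 + ‖y‖ ^ 2 := by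
    rw [← real_inner_self_eq_norm_sq, ← real_inner_self_eq_norm_sq]
    conv_lhs => rw [hxy]
    simp only [inner_add_left, inner_add_right, real_inner_smul_left, inner_smul_right, hyq', hyq,
      hqq]
    ring
  have hpos : 0 < ‖x‖ ^ 2 := by positivity
  have : (d - ε) * ‖x‖ ^ 2 ≤ lam q * ‖x‖ ^ 2 := by
    rw [hTx] at hlow
    rw [hnx] at hlow ⊢
    linarith
  exact le_of_mul_le_mul_right this hpos

/-- Upper bound of the projections of vectors orthogonal to the blocks. -/
theorem aux_upper {r : ℕ} (T S : H →ₗ[ℝ] H) (hT : T.IsSymmetric) (u f : Fin r → H)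
    (hu : Orthonormal ℝ u) (lam : Fin r → ℝ)
    (heig : ∀ q, T (u q) = lam q • u q) (g ε : ℝ) (hg : 0 ≤ g) (hlam : ∀ q, g ≤ lam q)
    (hS0 : ∀ x, (∀ k, inner ℝ (f k) x = 0) → S x = 0) (hE : ∀ x, ‖T x - S x‖ ≤ ε * ‖x‖)
    (w : H) (hw : ∀ k, inner ℝ (f k) w = 0) :
    g ^ 2 * ∑ q, (inner ℝ (u q) w) ^ 2 ≤ ε ^ 2 * ‖w‖ ^ 2 := by
  have h1 : ∑ q, ‖inner ℝ (u q) (T w)‖ ^ 2 ≤ ‖T w‖ ^ 2 := hu.sum_inner_products_le (T w)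
  have h2 : ‖T w‖ ≤ ε * ‖w‖ := by simpa [hS0 w hw] using hE w
  have h3 : ‖T w‖ ^ 2 ≤ (ε * ‖w‖) ^ 2 := pow_le_pow_left₀ (norm_nonneg _) h2 2
  rw [mul_pow] at h3
  refine le_trans ?_ (h1.trans h3)
  rw [Finset.mul_sum]
  refine Finset.sum_le_sum fun q _ => ?_
  rw [← hT, heig, real_inner_smul_left, Real.norm_eq_abs, sq_abs, mul_pow]
  exact mul_le_mul_of_nonneg_right (pow_le_pow_left₀ hg (hlam q) 2) (sq_nonneg _)

/-- Lower bound of the projections of vectors in the span of the blocks. -/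
theorem aux_lower {r : ℕ} (u f : Fin r → H)
    (hu : Orthonormal ℝ u) (hf : Orthonormal ℝ f) (κ : ℝ) (hκ0 : 0 ≤ κ) (hκ : κ < 1)
    (hup : ∀ w, (∀ k, inner ℝ (f k) w = 0) → ∑ q, (inner ℝ (u q) w) ^ 2 ≤ κ * ‖w‖ ^ 2)
    (a : Fin r → ℝ) :
    (1 - κ) * ∑ k, a k ^ 2 ≤ ∑ q, (inner ℝ (u q) (∑ k, a k • f k)) ^ 2 := by
  have hnu : ∀ z : Fin r → ℝ, ‖∑ q, z q • u q‖ ^ 2 = ∑ q, z q ^ 2 := by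
    intro z
    rw [← real_inner_self_eq_norm_sq, hu.inner_sum]
    simp [sq]
  -- key bound
  have key : ∀ z : Fin r → ℝ, (1 - κ) * ∑ q, z q ^ 2 ≤
      ∑ k, (inner ℝ (f k) (∑ q, z q • u q)) ^ 2 := by
    intro z
    set x := ∑ q, z q • u q with hx
    set c : Fin r → ℝ := fun k => inner ℝ (f k) x with hc
    set p := ∑ k, c k • f k with hp
    set w := x - p with hwdef
    have hw : ∀ k, inner ℝ (f k) w = 0 := by
      intro k
      rw [hwdef, inner_sub_right, hp, hf.inner_right_fintype]
      simp [hc]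
    have hpw : inner ℝ p w = 0 := by
      rw [hp, sum_inner]
      exact Finset.sum_eq_zero fun k _ => by rw [real_inner_smul_left, hw k, mul_zero]
    have hpn : ‖p‖ ^ 2 = ∑ k, c k ^ 2 := by
      rw [← real_inner_self_eq_norm_sq, hp, hf.inner_sum]
      simp [sq]
    have hxpw : x = p + w := by rw [hwdef]; abel
    have hxn : ‖x‖ ^ 2 = ‖p‖ ^ 2 + ‖w‖ ^ 2 := by
      rw [hxpw, @norm_add_sq_real, hpw]; ring
    have hww : ‖w‖ ^ 2 = ∑ q, z q * inner ℝ (u q) w := by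
      have : inner ℝ x w = ‖w‖ ^ 2 := by
        rw [hxpw, inner_add_left, hpw, real_inner_self_eq_norm_sq, zero_add]
      rw [← this, hx, sum_inner]
      exact Finset.sum_congr rfl fun q _ => real_inner_smul_left _ _ _
    have hcs := Finset.sum_mul_sq_le_sq_mul_sq Finset.univ z (fun q => inner ℝ (u q) w)
    rw [← hww] at hcs
    have hub := hup w hw
    have hz0 : 0 ≤ ∑ q, z q ^ 2 := Finset.sum_nonneg fun q _ => sq_nonneg _
    have hle : ‖w‖ ^ 2 ≤ κ * ∑ q, z q ^ 2 := by
      by_cases h0 : ‖w‖ ^ 2 = 0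
      · rw [h0]; positivity
      · have hpos : 0 < ‖w‖ ^ 2 := lt_of_le_of_ne (sq_nonneg _) (Ne.symm h0)
        have := mul_le_mul_of_nonneg_left hub hz0
        refine le_of_mul_le_mul_right ?_ hpos
        nlinarith
    have := hnu z
    rw [← hx] at this
    linarith
  let L : (Fin r → ℝ) →ₗ[ℝ] (Fin r → ℝ) :=
    { toFun := fun z k => inner ℝ (f k) (∑ q, z q • u q)
      map_add' := by
        intro a b; ext p
        simp [add_smul, Finset.sum_add_distrib, inner_add_right]
      map_smul' := by
        intro c a; ext p
        simp [mul_smul, ← Finset.smul_sum, inner_smul_right] }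
  have hinj : Function.Injective L := by
    rw [injective_iff_map_eq_zero]
    intro z hz
    have h1 := key z
    have h2 : ∀ k, inner ℝ (f k) (∑ q, z q • u q) = 0 := fun k => congrFun hz k
    simp only [h2] at h1
    have hz0 : 0 ≤ ∑ q, z q ^ 2 := Finset.sum_nonneg fun q _ => sq_nonneg _
    have h3 : ∑ q, z q ^ 2 = 0 := by
      simp at h1
      nlinarith
    rw [Finset.sum_eq_zero_iff_of_nonneg (fun q _ => sq_nonneg _)] at h3
    funext q
    simpa using h3 q (Finset.mem_univ q)
  obtain ⟨z, hz⟩ := (LinearMap.injective_iff_surjective.1 hinj) a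
  have hz' : ∀ k, inner ℝ (f k) (∑ q, z q • u q) = a k := fun k => congrFun hz k
  have hkz := key z
  simp only [hz'] at hkz
  set w := ∑ k, a k • f k with hw
  have h1 : ∑ k, a k ^ 2 = ∑ q, z q * inner ℝ (u q) w := by
    have e1 : inner ℝ w (∑ q, z q • u q) = ∑ k, a k ^ 2 := by
      rw [hw, sum_inner]
      exact Finset.sum_congr rfl fun k _ => by rw [real_inner_smul_left, hz', sq]
    rw [← e1, inner_sum]
    exact Finset.sum_congr rfl fun q _ => by rw [real_inner_smul_right, real_inner_comm]
  have hcs := Finset.sum_mul_sq_le_sq_mul_sq Finset.univ z (fun q => inner ℝ (u q) w)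
  rw [← h1] at hcs
  have hA : 0 ≤ ∑ k, a k ^ 2 := Finset.sum_nonneg fun q _ => sq_nonneg _
  have hQ : 0 ≤ ∑ q, (inner ℝ (u q) w) ^ 2 := Finset.sum_nonneg fun q _ => sq_nonneg _
  by_cases h0 : ∑ k, a k ^ 2 = 0
  · rw [h0]; simpa using hQ
  · have hpos : 0 < ∑ k, a k ^ 2 := lt_of_le_of_ne hA (Ne.symm h0)
    refine le_of_mul_le_mul_right ?_ hpos
    have := mul_le_mul_of_nonneg_right hkz hQ
    nlinarith

theorem aux_diff {r : ℕ} (u f : Fin r → H)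
    (hu : Orthonormal ℝ u) (hf : Orthonormal ℝ f) (κ : ℝ) (hκ0 : 0 ≤ κ) (hκ : κ < 1)
    (hup : ∀ w, (∀ k, inner ℝ (f k) w = 0) → ∑ q, (inner ℝ (u q) w) ^ 2 ≤ κ * ‖w‖ ^ 2)
    (w : H) :
    √((1 - κ) * ∑ k, (inner ℝ (f k) w) ^ 2) - √(κ * ‖w‖ ^ 2) ≤
      √(∑ q, (inner ℝ (u q) w) ^ 2) := by
  let N : H → EuclideanSpace ℝ (Fin r) := fun x => WithLp.toLp 2 (fun q => inner ℝ (u q) x)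
  have hN : ∀ x, ‖N x‖ = √(∑ q, (inner ℝ (u q) x) ^ 2) := by
    intro x
    rw [EuclideanSpace.norm_eq]
    simp [N]
  set w1 := ∑ k, (inner ℝ (f k) w : ℝ) • f k with hw1
  set w2 := w - w1 with hw2
  have hw : ∀ k, inner ℝ (f k) w2 = 0 := by
    intro k
    rw [hw2, inner_sub_right, hw1, hf.inner_right_fintype, sub_self]
  have hpw : inner ℝ w1 w2 = 0 := by
    rw [hw1, sum_inner]
    exact Finset.sum_eq_zero fun k _ => by rw [real_inner_smul_left, hw k, mul_zero]
  have hww : w = w1 + w2 := by rw [hw2]; abel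
  have hwn : ‖w2‖ ^ 2 ≤ ‖w‖ ^ 2 := by
    conv_rhs => rw [hww, @norm_add_sq_real, hpw]
    nlinarith [sq_nonneg ‖w1‖]
  have h1 := aux_lower u f hu hf κ hκ0 hκ hup (fun k => inner ℝ (f k) w)
  rw [← hw1] at h1
  have h2 : ∑ q, (inner ℝ (u q) w2) ^ 2 ≤ κ * ‖w‖ ^ 2 :=
    (hup w2 hw).trans (mul_le_mul_of_nonneg_left hwn hκ0)
  have h3 := Real.sqrt_le_sqrt h1
  have h4 := Real.sqrt_le_sqrt h2
  rw [← hN] at h3 h4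
  rw [← hN]
  have h5 : N w = N w1 + N w2 := by
    ext q
    simp only [N, PiLp.add_apply]
    conv_lhs => rw [hww, inner_add_right]
  have h6 : ‖N w1‖ ≤ ‖N w‖ + ‖N w2‖ := by
    have : N w1 = N w - N w2 := by rw [h5]; abel
    rw [this]
    exact norm_sub_le _ _
  linarith
end spectral

section greedy

/-- number of clusters in a label list -/
def aux_K (l : List ℕ) : ℕ := l.foldr (fun a b => max (a + 1) b) 0

theorem aux_lt_K (l : List ℕ) : ∀ a ∈ l, a < aux_K l := by
  induction l with
  | nil => simp
  | cons b l ih =>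
    intro a ha
    simp only [aux_K, List.foldr_cons] at ih ⊢
    rcases List.mem_cons.1 ha with h | h
    · subst h; omega
    · have := ih a h; omega

theorem aux_K_append (l : List ℕ) (b : ℕ) : aux_K (l ++ [b]) = max (aux_K l) (b + 1) := by
  induction l with
  | nil => simp [aux_K]
  | cons a l ih =>
    simp only [aux_K, List.cons_append, List.foldr_cons] at ih ⊢
    rw [ih, max_assoc]

theorem aux_eDist {r : ℕ} (v w : Fin r → ℝ) :
    eDist v w = ‖(WithLp.toLp 2 v : EuclideanSpace ℝ (Fin r)) - WithLp.toLp 2 w‖ := by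
  rw [EuclideanSpace.norm_eq]
  simp [eDist]

theorem aux_eDist_comm {r : ℕ} (v w : Fin r → ℝ) : eDist v w = eDist w v := by
  rw [aux_eDist, aux_eDist, norm_sub_rev]

theorem aux_eDist_tri {r : ℕ} (v w x : Fin r → ℝ) : eDist v x ≤ eDist v w + eDist w x := by
  simp only [aux_eDist]
  exact norm_sub_le_norm_sub_add_norm_sub _ _ _

theorem aux_ctr {r : ℕ} (u : ℕ → Fin r → ℝ) (p : Fin r → ℝ) (δ : ℝ) (l : List ℕ) (hl : l ≠ [])
    (h : ∀ i ∈ l, eDist p (u i) ≤ δ) :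
    eDist p ((l.length : ℝ)⁻¹ • (l.map u).sum) ≤ δ := by
  have key : ∀ l : List ℕ, (∀ i ∈ l, eDist p (u i) ≤ δ) →
      ‖(l.length : ℝ) • (WithLp.toLp 2 p : EuclideanSpace ℝ (Fin r)) -
        WithLp.toLp 2 (l.map u).sum‖ ≤ l.length * δ := by
    intro l
    induction l with
    | nil => intro _; simp
    | cons a l ih =>
      intro h
      have h1 := ih fun i hi => h i (List.mem_cons_of_mem _ hi)
      have h2 := h a (List.mem_cons_self)
      rw [aux_eDist] at h2
      have e : ((a :: l).length : ℝ) • (WithLp.toLp 2 p : EuclideanSpace ℝ (Fin r)) -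
          WithLp.toLp 2 ((a :: l).map u).sum =
          ((WithLp.toLp 2 p : EuclideanSpace ℝ (Fin r)) - WithLp.toLp 2 (u a)) +
          ((l.length : ℝ) • (WithLp.toLp 2 p : EuclideanSpace ℝ (Fin r)) -
        WithLp.toLp 2 (l.map u).sum) := by
        simp only [List.length_cons, List.map_cons, List.sum_cons, WithLp.toLp_add]
        push_cast
        rw [add_smul, one_smul]; abel
      rw [e]
      refine (norm_add_le _ _).trans ?_
      simp only [List.length_cons]
      push_cast
      linarith
  have hpos : (0 : ℝ) < l.length := by
    exact_mod_cast List.length_pos_iff.2 hl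
  have h1 := key l h
  rw [aux_eDist]
  have e : (WithLp.toLp 2 p : EuclideanSpace ℝ (Fin r)) -
      WithLp.toLp 2 ((l.length : ℝ)⁻¹ • (l.map u).sum) =
      (l.length : ℝ)⁻¹ • ((l.length : ℝ) • (WithLp.toLp 2 p : EuclideanSpace ℝ (Fin r)) -
        WithLp.toLp 2 (l.map u).sum) := by
    rw [smul_sub, smul_smul, inv_mul_cancel₀ hpos.ne', one_smul, WithLp.toLp_smul]
  rw [e, norm_smul, Real.norm_of_nonneg (by positivity), inv_mul_le_iff₀ hpos]
  exact h1

/-- centroid at a given stage -/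
noncomputable def aux_c {r : ℕ} (u : ℕ → Fin r → ℝ) (prev : List ℕ) (j q : ℕ) : Fin r → ℝ :=
  ((((List.range j).filter fun i => prev.getD i 0 = q).length : ℝ))⁻¹ •
    (((List.range j).filter fun i => prev.getD i 0 = q).map u).sum

/-- label at a given stage -/
noncomputable def aux_lab {r : ℕ} (u : ℕ → Fin r → ℝ) (t : ℝ) (prev : List ℕ) (j : ℕ) : ℕ :=
  match (List.range (aux_K prev)).argmin fun q => eDist (u j) (aux_c u prev j q) with
  | none => aux_K prev
  | some best => if eDist (u j) (aux_c u prev j best) < t then best else aux_K prev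

theorem aux_step {r : ℕ} (u : ℕ → Fin r → ℝ) (t : ℝ) (j : ℕ) :
    greedyKMeans r u t (j + 1) =
      greedyKMeans r u t j ++ [aux_lab u t (greedyKMeans r u t j) j] := rfl

theorem aux_lab_cases {r : ℕ} (u : ℕ → Fin r → ℝ) (t : ℝ) (prev : List ℕ) (j : ℕ) :
    (aux_lab u t prev j < aux_K prev ∧
      eDist (u j) (aux_c u prev j (aux_lab u t prev j)) < t) ∨
    (aux_lab u t prev j = aux_K prev ∧ ∀ q < aux_K prev, t ≤ eDist (u j) (aux_c u prev j q)) := by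
  unfold aux_lab
  cases hm : (List.range (aux_K prev)).argmin fun q => eDist (u j) (aux_c u prev j q) with
  | none =>
    right
    rw [List.argmin_eq_none, List.range_eq_nil] at hm
    refine ⟨rfl, fun q hq => ?_⟩
    omega
  | some best =>
    have hmem := List.argmin_mem hm
    by_cases hlt : eDist (u j) (aux_c u prev j best) < t
    · left
      simp only [hlt, if_true]
      exact ⟨List.mem_range.1 hmem, trivial⟩
    · right
      simp only [hlt, if_false]
      refine ⟨trivial, fun q hq => ?_⟩
      exact (not_lt.1 hlt).trans
        (List.le_of_mem_argmin (f := fun q => eDist (u j) (aux_c u prev j q))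
          (List.mem_range.2 hq) hm)

theorem aux_greedy {r n : ℕ} {β : Type*} (u : ℕ → Fin r → ℝ) (t δ D : ℝ) (b : ℕ → β)
    (hsame : ∀ i < n, ∀ j < n, b i = b j → eDist (u i) (u j) ≤ δ)
    (hdiff : ∀ i < n, ∀ j < n, b i ≠ b j → D ≤ eDist (u i) (u j))
    (h1 : δ < t) (h2 : t ≤ D - δ) (j : ℕ) (hj : j ≤ n) :
    (greedyKMeans r u t j).length = j ∧
    (∀ q < aux_K (greedyKMeans r u t j), ∃ i < j, (greedyKMeans r u t j).getD i 0 = q) ∧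
    (∀ i < j, ∀ i' < j, ((greedyKMeans r u t j).getD i 0 = (greedyKMeans r u t j).getD i' 0 ↔
      b i = b i')) := by
  induction j with
  | zero => simp [greedyKMeans, aux_K]
  | succ j ih =>
    obtain ⟨hlen, hsurj, hiff⟩ := ih (by omega)
    rw [aux_step]
    set prev := greedyKMeans r u t j with hprev
    set lab := aux_lab u t prev j with hlab
    have hold : ∀ i < j, (prev ++ [lab]).getD i 0 = prev.getD i 0 := by
      intro i hi
      exact List.getD_append _ _ _ _ (by omega)
    have hnew : (prev ++ [lab]).getD j 0 = lab := by
      rw [List.getD_append_right _ _ _ _ (by omega)]; simp [hlen]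
    have hltK : ∀ i < j, prev.getD i 0 < aux_K prev := by
      intro i hi
      apply aux_lt_K
      rw [List.getD_eq_getElem _ _ (by omega)]
      exact List.getElem_mem _
    have hctr : ∀ i < j, ∀ p, (∀ k < j, b k = b i → eDist p (u k) ≤ δ) →
        eDist p (aux_c u prev j (prev.getD i 0)) ≤ δ := by
      intro i hi p hp
      refine aux_ctr u p δ _ ?_ ?_
      · apply List.ne_nil_of_mem (a := i)
        simp [hi]
      · intro k hk
        simp only [List.mem_filter, List.mem_range, decide_eq_true_eq] at hk
        exact hp k hk.1 ((hiff k hk.1 i hi).1 hk.2)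
    have hcases := aux_lab_cases u t prev j
    rw [← hlab] at hcases
    have hlabel : ∀ i < j, (prev.getD i 0 = lab ↔ b i = b j) := by
      intro i hi
      constructor
      · intro he
        by_contra hne
        have hK := hltK i hi
        rcases hcases with ⟨_, hlt⟩ | ⟨hh, _⟩
        · rw [← he] at hlt
          have e1 := hctr i hi (u i) (fun k hk hb => hsame i (by omega) k (by omega) hb.symm)
          have e2 := hdiff j (by omega) i (by omega) (Ne.symm hne)
          have e3 := aux_eDist_tri (u j) (aux_c u prev j (prev.getD i 0)) (u i)
          rw [aux_eDist_comm (aux_c u prev j (prev.getD i 0)) (u i)] at e3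
          linarith
        · omega
      · intro hb
        have e1 := hctr i hi (u j)
          (fun k hk hbk => hsame j (by omega) k (by omega) (hbk.trans hb).symm)
        rcases hcases with ⟨hK, hlt⟩ | ⟨_, hge⟩
        · obtain ⟨i', hi', he'⟩ := hsurj lab hK
          rw [← he', hiff i hi i' hi']
          by_contra hne
          rw [← he'] at hlt
          have e1 := hctr i' hi' (u i') (fun k hk hb => hsame i' (by omega) k (by omega) hb.symm)
          have e2 := hdiff j (by omega) i' (by omega) (by rw [← hb]; exact hne)
          have e3 := aux_eDist_tri (u j) (aux_c u prev j (prev.getD i' 0)) (u i')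
          rw [aux_eDist_comm (aux_c u prev j (prev.getD i' 0)) (u i')] at e3
          linarith
        · have := hge _ (hltK i hi)
          linarith
    refine ⟨by simp [hlen], ?_, ?_⟩
    · intro q hq
      rw [aux_K_append] at hq
      by_cases hqK : q < aux_K prev
      · obtain ⟨i, hi, he⟩ := hsurj q hqK
        exact ⟨i, by omega, by rw [hold i hi, he]⟩
      · refine ⟨j, by omega, ?_⟩
        rw [hnew]
        have : lab ≤ aux_K prev := by
          rcases hcases with h | h
          · exact h.1.le
          · exact h.1.le
        omega
    · intro i hi i' hi'
      rcases Nat.lt_succ_iff_lt_or_eq.1 hi with h | h <;>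
      rcases Nat.lt_succ_iff_lt_or_eq.1 hi' with h' | h'
      · rw [hold i h, hold i' h', hiff i h i' h']
      · subst h'
        rw [hold i h, hnew, hlabel i h]
      · subst h
        rw [hold i' h', hnew, eq_comm, hlabel i' h', eq_comm]
      · subst h; subst h'; simp
end greedy

/-- Proposition 4, exact clustering: if `ℬ` is a block structure with `r`
blocks of equal size `d ≥ 2`, `B` its indicator matrix, `Bt` a symmetric matrix with
`‖Bt − B‖₂ < √(2d)/8`, and the columns of `U` form an orthonormal family of eigenvectors
of `Bt` for its `r` largest eigenvalues (counted with multiplicity), then the greedy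
K-means procedure with threshold `1/√(2d)` applied to the rows of `U` outputs a labeling
inducing exactly the partition of `{1,…,n}` given by `ℬ`. -/
theorem exact_clustering
    {n r d : ℕ} (hd : 2 ≤ d) (hn : n = r * d)
    (ℬ : Fin n → Fin r)
    (hfib : ∀ q, (Finset.univ.filter fun i => ℬ i = q).card = d)
    (B : Matrix (Fin n) (Fin n) ℝ)
    (hB : B = Matrix.of fun i j => if ℬ i = ℬ j then 1 else 0)
    (Bt : Matrix (Fin n) (Fin n) ℝ) (hsym : Bt.IsHermitian)
    (hclose : specNorm (Bt - B) < Real.sqrt (2 * d) / 8)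
    (U : Matrix (Fin n) (Fin r) ℝ)
    -- the columns of U are orthonormal
    (horth : ∀ q q', (∑ i, U i q * U i q') = if q = q' then 1 else 0)
    -- the columns of U are eigenvectors of Bt for its r largest eigenvalues
    (lam : Fin r → ℝ)
    (heig : ∀ q, Bt.mulVec (fun i => U i q) = lam q • fun i => U i q)
    (htop : ∀ (v : Fin n → ℝ) (c : ℝ), v ≠ 0 → Bt.mulVec v = c • v →
      (∀ q, (∑ i, v i * U i q) = 0) → ∀ q, c ≤ lam q)
    -- the stream of points fed to the greedy K-means: the rows of U
    (u : ℕ → Fin r → ℝ)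
    (hu : ∀ i : ℕ, ∀ h : i < n, u i = fun q => U ⟨i, h⟩ q)
    (labels : List ℕ)
    (hlabels : labels = greedyKMeans r u (1 / Real.sqrt (2 * d)) n) :
    ∀ i j : Fin n, (labels.getD i 0 = labels.getD j 0 ↔ ℬ i = ℬ j) := by
  have hd2 : (2 : ℝ) ≤ d := by exact_mod_cast hd
  have hd0 : (0 : ℝ) < d := by linarith
  set s : ℝ := √(d : ℝ) with hs
  have hss : s ^ 2 = d := Real.sq_sqrt hd0.le
  have hs0 : 0 < s := Real.sqrt_pos.2 hd0
  set ε : ℝ := specNorm (Bt - B) with hε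
  have hε0 : 0 ≤ ε := norm_nonneg _
  have h2d : √(2 * (d : ℝ)) ^ 2 = 2 * d := Real.sq_sqrt (by positivity)
  have h2dnn : 0 ≤ √(2 * (d : ℝ)) := Real.sqrt_nonneg _
  have h2d2 : 2 ≤ √(2 * (d : ℝ)) := by
    apply Real.le_sqrt_of_sq_le; nlinarith
  have hεd : ε ≤ d / 8 := by nlinarith
  have hε2 : ε ^ 2 ≤ d / 32 := by nlinarith
  let T : EuclideanSpace ℝ (Fin n) →ₗ[ℝ] EuclideanSpace ℝ (Fin n) := Matrix.toEuclideanLin Bt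
  let S : EuclideanSpace ℝ (Fin n) →ₗ[ℝ] EuclideanSpace ℝ (Fin n) := Matrix.toEuclideanLin B
  have hT : T.IsSymmetric := Matrix.isSymmetric_toEuclideanLin_iff.2 hsym
  have hE : ∀ x, ‖T x - S x‖ ≤ ε * ‖x‖ := by
    intro x
    have h := ((Matrix.toEuclideanLin.trans LinearMap.toContinuousLinearMap) (Bt - B)).le_opNorm x
    have e : ((Matrix.toEuclideanLin.trans LinearMap.toContinuousLinearMap) (Bt - B)) x
        = T x - S x := by
      simp [T, S]
    rw [e] at h
    exact h
  let c : Fin r → EuclideanSpace ℝ (Fin n) := fun q => WithLp.toLp 2 (fun i => U i q)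
  let f : Fin r → EuclideanSpace ℝ (Fin n) := fun k =>
    WithLp.toLp 2 (fun i => if ℬ i = k then s⁻¹ else 0)
  have hin : ∀ x y : EuclideanSpace ℝ (Fin n), inner ℝ x y = ∑ i, x i * y i := by
    intro x y
    rw [PiLp.inner_apply]
    exact Finset.sum_congr rfl fun i _ => by simp [mul_comm]
  have hc : Orthonormal ℝ c := by
    rw [orthonormal_iff_ite]
    intro p q
    rw [hin]
    exact horth p q
  have hf : Orthonormal ℝ f := by
    rw [orthonormal_iff_ite]
    intro p q
    rw [hin]
    by_cases hpq : p = q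
    · subst hpq
      have : ∀ i, f p i * f p i = if ℬ i = p then (d : ℝ)⁻¹ else 0 := by
        intro i
        simp only [f]
        split_ifs
        · rw [← hss]; field_simp
        · simp
      simp only [this]
      rw [← Finset.sum_filter, Finset.sum_const, hfib]
      simp [hd0.ne']
    · rw [if_neg hpq]
      refine Finset.sum_eq_zero fun i _ => ?_
      simp only [f]
      by_cases h : ℬ i = p
      · simp [h, hpq]
      · rw [if_neg h, zero_mul]
  have hSx : ∀ x i, (S x) i = s * inner ℝ (f (ℬ i)) x := by
    intro x i
    rw [hin, Finset.mul_sum]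
    simp only [S, hB, Matrix.toEuclideanLin, f]
    simp [Matrix.mulVec, dotProduct]
    refine Finset.sum_congr rfl fun j _ => ?_
    by_cases h : ℬ i = ℬ j
    · simp [h, hs0.ne']
    · simp [h, Ne.symm h]
  have hSf : ∀ k, S (f k) = (d : ℝ) • f k := by
    intro k
    ext i
    rw [hSx, orthonormal_iff_ite.1 hf]
    simp only [f, PiLp.smul_apply, smul_eq_mul]
    split_ifs
    · rw [← hss]; field_simp
    · simp
  have hS0 : ∀ x, (∀ k, inner ℝ (f k) x = 0) → S x = 0 := by
    intro x hx
    ext i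
    rw [hSx, hx]; simp
  have hTc : ∀ q, T (c q) = lam q • c q := by
    intro q
    have := heig q
    ext i
    have h2 := congrFun this i
    simpa [T, c, Matrix.toEuclideanLin] using h2
  have htop' : ∀ (v : EuclideanSpace ℝ (Fin n)) (a : ℝ), v ≠ 0 → T v = a • v →
      (∀ q, inner ℝ (c q) v = 0) → ∀ q, a ≤ lam q := by
    intro v a hv hTv hcv
    refine htop (fun i => v i) a ?_ ?_ ?_
    · intro h
      apply hv
      ext i
      exact congrFun h i
    · funext i
      have h2 := congrArg (fun x : EuclideanSpace ℝ (Fin n) => x i) hTv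
      simpa [T, Matrix.toEuclideanLin] using h2
    · intro q
      have := hcv q
      rw [hin] at this
      rw [← this]
      exact Finset.sum_congr rfl fun i _ => mul_comm _ _
  have hlam : ∀ q, (d : ℝ) - ε ≤ lam q :=
    aux_lam_ge T S hT c f hc hf lam hTc htop' d ε hSf hE
  set κ : ℝ := 2 / (49 * d) with hκdef
  have hκ0 : 0 ≤ κ := by positivity
  have hκ1 : κ ≤ 1 / 49 := by
    rw [hκdef, div_le_div_iff₀ (by positivity) (by norm_num)]; linarith
  have hg : 7 / 8 * (d : ℝ) ≤ d - ε := by linarith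
  have hεg : ε ^ 2 ≤ κ * (d - ε) ^ 2 := by
    have h1 : κ * (7 / 8 * d) ^ 2 ≤ κ * (d - ε) ^ 2 :=
      mul_le_mul_of_nonneg_left (pow_le_pow_left₀ (by positivity) hg 2) hκ0
    have h2 : κ * (7 / 8 * (d : ℝ)) ^ 2 = d / 32 := by
      rw [hκdef]; field_simp; norm_num
    linarith
  have hup : ∀ w, (∀ k, inner ℝ (f k) w = 0) →
      ∑ q, (inner ℝ (c q) w) ^ 2 ≤ κ * ‖w‖ ^ 2 := by
    intro w hw
    have h1 := aux_upper T S hT c f hc lam hTc (d - ε) ε (by linarith) hlam hS0 hE w hw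
    have h2 := mul_le_mul_of_nonneg_right hεg (sq_nonneg ‖w‖)
    have hpos : 0 < ((d : ℝ) - ε) ^ 2 := pow_pos (by linarith) 2
    refine le_of_mul_le_mul_left ?_ hpos
    linarith
  -- the difference vectors
  let w : Fin n → Fin n → EuclideanSpace ℝ (Fin n) := fun i j =>
    EuclideanSpace.single i (1 : ℝ) - EuclideanSpace.single j (1 : ℝ)
  have hiw : ∀ (x : EuclideanSpace ℝ (Fin n)) i j, inner ℝ x (w i j) = x i - x j := by
    intro x i j
    simp [w, inner_sub_right, EuclideanSpace.inner_single_right]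
  have hwn : ∀ i j, ‖w i j‖ ^ 2 ≤ 2 := by
    intro i j
    rw [← real_inner_self_eq_norm_sq, hiw]
    by_cases h : i = j
    · subst h; simp
    · simp [w, h, Ne.symm h]; norm_num
  have hdist : ∀ i j : Fin n, eDist (u i) (u j) = √(∑ q, (inner ℝ (c q) (w i j)) ^ 2) := by
    intro i j
    rw [eDist, hu i i.2, hu j j.2]
    simp only [hiw]
    rfl
  have hκw : ∀ i j, √(κ * ‖w i j‖ ^ 2) ≤ 2 / 7 / s := by
    intro i j
    rw [Real.sqrt_le_left (by positivity)]
    refine (mul_le_mul_of_nonneg_left (hwn i j) hκ0).trans (le_of_eq ?_)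
    rw [hκdef, div_pow, hss]; field_simp; norm_num
  have hsame : ∀ i j : Fin n, ℬ i = ℬ j → eDist (u i) (u j) ≤ 2 / 7 / s := by
    intro i j hij
    rw [hdist]
    refine (Real.sqrt_le_sqrt (hup _ ?_)).trans (hκw i j)
    intro k
    rw [hiw]
    simp [f, hij]
  have hdiff : ∀ i j : Fin n, ℬ i ≠ ℬ j → 1.39 / s - 2 / 7 / s ≤ eDist (u i) (u j) := by
    intro i j hij
    have h1 := aux_diff c f hc hf κ hκ0 (by linarith) hup (w i j)
    rw [← hdist] at h1
    have h2 : ∑ k, (inner ℝ (f k) (w i j)) ^ 2 = 2 / d := by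
      have : ∀ k, (inner ℝ (f k) (w i j)) ^ 2 =
          (if ℬ i = k then (d : ℝ)⁻¹ else 0) + (if ℬ j = k then (d : ℝ)⁻¹ else 0) := by
        intro k
        rw [hiw]
        simp only [f]
        by_cases hik : ℬ i = k
        · have hjk : ℬ j ≠ k := fun h => hij (hik.trans h.symm)
          simp [hik, hjk, hss]
        · by_cases hjk : ℬ j = k
          · simp [hik, hjk, hss]
          · simp [hik, hjk]
      simp only [this, Finset.sum_add_distrib, Finset.sum_ite_eq, Finset.mem_univ, if_true]
      ring
    rw [h2] at h1
    have h3 : 1.39 / s ≤ √((1 - κ) * (2 / d)) := by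
      apply Real.le_sqrt_of_sq_le
      rw [div_pow, hss, ← mul_div_assoc]
      apply div_le_div_of_nonneg_right _ hd0.le
      norm_num
      linarith
    have := hκw i j
    linarith
  have ht : 1 / √(2 * (d : ℝ)) = (√2)⁻¹ / s := by
    rw [Real.sqrt_mul (by norm_num), ← hs]; field_simp
  have hr1 : (0.7 : ℝ) ≤ (√2)⁻¹ := by
    rw [le_inv_comm₀ (by norm_num) (by positivity), Real.sqrt_le_left (by norm_num)]; norm_num
  have hr2 : (√2)⁻¹ ≤ (0.75 : ℝ) := by
    rw [inv_le_comm₀ (by positivity) (by norm_num)]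
    apply Real.le_sqrt_of_sq_le; norm_num
  have hfin := aux_greedy (n := n) u (1 / √(2 * (d : ℝ))) (2 / 7 / s) (1.39 / s - 2 / 7 / s)
    (fun i => if h : i < n then some (ℬ ⟨i, h⟩) else none)
    (by
      intro i hi j hj hb
      simp only [hi, hj, dif_pos, Option.some.injEq] at hb
      exact hsame ⟨i, hi⟩ ⟨j, hj⟩ hb)
    (by
      intro i hi j hj hb
      simp only [hi, hj, dif_pos, ne_eq, Option.some.injEq] at hb
      exact hdiff ⟨i, hi⟩ ⟨j, hj⟩ hb)
    (by
      rw [ht]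
      apply div_lt_div_of_pos_right _ hs0
      norm_num at hr1 ⊢; linarith)
    (by
      rw [ht, ← sub_div, ← sub_div]
      apply div_le_div_of_nonneg_right _ hs0.le
      norm_num at hr2 ⊢; linarith) n le_rfl
  intro i j
  have := hfin.2.2 i i.2 j j.2
  rw [hlabels, this]
  simp
end

section
/- Let n, m, d be positive integers, μ, ν, γ > 0, 0 < p ≤ 1/2. Let P ∈ ℝ^{n×n} be an invertible symmetric matrix with ‖P⁻¹‖₂ ≤ ν, let B, E, C ∈ ℝ^{n×n} with ‖E − γ·I_n‖₂ ≤ max{1/m², n/m⁴}·d·√n·log(n)·μ⁸, let Σ = p(1−p)·P B P + 2p·E + C, and let Σ̂ ∈ ℝ^{n×n} be arbitrary. Define B̂ = (1/(p(1−p)))·P⁻¹ (Σ̂ − 2pγ·I_n − C) P⁻¹. Then ‖B̂ − B‖₂ ≤ ν²·( (2/p)·‖Σ̂ − Σ‖₂ + 4·max{1/m², n/m⁴}·d·√n·log(n)·μ⁸ ). -/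
open Matrix

lemma specNorm_add_le {m n : ℕ} (A B : Matrix (Fin m) (Fin n) ℝ) :
    specNorm (A + B) ≤ specNorm A + specNorm B := by
  unfold specNorm
  rw [map_add]
  exact norm_add_le _ _

lemma specNorm_smul {m n : ℕ} (c : ℝ) (A : Matrix (Fin m) (Fin n) ℝ) :
    specNorm (c • A) = |c| * specNorm A := by
  unfold specNorm
  rw [map_smul, norm_smul, Real.norm_eq_abs]

lemma specNorm_nonneg {m n : ℕ} (A : Matrix (Fin m) (Fin n) ℝ) : 0 ≤ specNorm A :=
  norm_nonneg _

open scoped Matrix.Norms.L2Operator in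
lemma specNorm_mul_le {m n k : ℕ} (A : Matrix (Fin m) (Fin n) ℝ)
    (B : Matrix (Fin n) (Fin k) ℝ) :
    specNorm (A * B) ≤ specNorm A * specNorm B :=
  Matrix.l2_opNorm_mul A B

/-- deterministic finite-snapshot estimation bound.  If
`Σ = p(1−p)·PBP + 2p·E + C` and `B̂ = (1/(p(1−p)))·P⁻¹(Σ̂ − 2pγI − C)P⁻¹`, then
`‖B̂ − B‖₂ ≤ ν²((2/p)‖Σ̂ − Σ‖₂ + 4·max{1/m², n/m⁴}·d·√n·log(n)·μ⁸)`. -/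
theorem finite_snapshot_bound
    {n m d : ℕ} (hn : 0 < n) (hm : 0 < m) (hd : 0 < d)
    (μ ν γ : ℝ) (hμ : 0 < μ) (hν : 0 < ν) (hγ : 0 < γ)
    (p : ℝ) (hp0 : 0 < p) (hp1 : p ≤ 1 / 2)
    (P : Matrix (Fin n) (Fin n) ℝ) (hPsym : P.IsHermitian) (hPinv : IsUnit P.det)
    (hPnorm : specNorm P⁻¹ ≤ ν)
    (B E C S Shat : Matrix (Fin n) (Fin n) ℝ)
    (hE : specNorm (E - γ • (1 : Matrix (Fin n) (Fin n) ℝ))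
      ≤ max (1 / (m : ℝ) ^ 2) ((n : ℝ) / (m : ℝ) ^ 4) * d * Real.sqrt n * Real.log n * μ ^ 8)
    (hS : S = (p * (1 - p)) • (P * B * P) + (2 * p) • E + C)
    (Bhat : Matrix (Fin n) (Fin n) ℝ)
    (hBhat : Bhat = (1 / (p * (1 - p)))
        • (P⁻¹ * (Shat - (2 * p * γ) • (1 : Matrix (Fin n) (Fin n) ℝ) - C) * P⁻¹)) :
    specNorm (Bhat - B)
      ≤ ν ^ 2 * ((2 / p) * specNorm (Shat - S)
        + 4 * max (1 / (m : ℝ) ^ 2) ((n : ℝ) / (m : ℝ) ^ 4) * d * Real.sqrt n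
          * Real.log n * μ ^ 8) := by
  have hq : 0 < 1 - p := by linarith
  have hpq : p * (1 - p) ≠ 0 := (mul_pos hp0 hq).ne'
  have hB : P⁻¹ * (P * B * P) * P⁻¹ = B := by
    rw [Matrix.mul_assoc P B P, Matrix.nonsing_inv_mul_cancel_left _ _ hPinv,
      Matrix.mul_nonsing_inv_cancel_right _ _ hPinv]
  have key : Bhat - B = (1 / (p * (1 - p))) •
      (P⁻¹ * ((Shat - S) + (2 * p) • (E - γ • (1 : Matrix (Fin n) (Fin n) ℝ))) * P⁻¹) := by
    have h1 : (Shat - S) + (2 * p) • (E - γ • (1 : Matrix (Fin n) (Fin n) ℝ))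
        = (Shat - (2 * p * γ) • (1 : Matrix (Fin n) (Fin n) ℝ) - C)
          - (p * (1 - p)) • (P * B * P) := by
      rw [hS, smul_sub, smul_smul]
      abel
    rw [h1, Matrix.mul_sub, Matrix.sub_mul, smul_sub, ← hBhat, Matrix.mul_smul,
      Matrix.smul_mul, hB, smul_smul, one_div_mul_cancel hpq, one_smul]
  have e0 := specNorm_nonneg (E - γ • (1 : Matrix (Fin n) (Fin n) ℝ))
  have s0 := specNorm_nonneg (Shat - S)
  have n0 := specNorm_nonneg P⁻¹
  set M : ℝ := max (1 / (m : ℝ) ^ 2) ((n : ℝ) / (m : ℝ) ^ 4) * d * Real.sqrt n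
    * Real.log n * μ ^ 8 with hM
  have hX : specNorm ((Shat - S) + (2 * p) • (E - γ • (1 : Matrix (Fin n) (Fin n) ℝ)))
      ≤ specNorm (Shat - S) + 2 * p * M := by
    refine (specNorm_add_le _ _).trans ?_
    rw [specNorm_smul, abs_of_pos (by positivity : (0 : ℝ) < 2 * p)]
    gcongr
  have hM0 : 0 ≤ M := e0.trans hE
  have hY : specNorm (P⁻¹ * ((Shat - S) + (2 * p) • (E - γ • (1 : Matrix (Fin n) (Fin n) ℝ)))
      * P⁻¹) ≤ ν * (specNorm (Shat - S) + 2 * p * M) * ν := by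
    refine (specNorm_mul_le _ _).trans ?_
    refine mul_le_mul ((specNorm_mul_le _ _).trans ?_) hPnorm n0 (by positivity)
    exact mul_le_mul hPnorm hX (specNorm_nonneg _) hν.le
  have hc : 1 / (p * (1 - p)) ≤ 2 / p := by
    rw [div_le_div_iff₀ (mul_pos hp0 hq) hp0]
    nlinarith
  rw [key, specNorm_smul, abs_of_pos (one_div_pos.mpr (mul_pos hp0 hq))]
  calc _ ≤ (2 / p) * (ν * (specNorm (Shat - S) + 2 * p * M) * ν) :=
        mul_le_mul hc hY (specNorm_nonneg _) (by positivity)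
    _ = ν ^ 2 * ((2 / p) * specNorm (Shat - S) + 4 * M) := by
        field_simp
        ring
    _ = _ := by
        rw [hM]
        ring
end

section
/- Let A ∈ ℝ^{m×n} with m ≤ n and n ≥ 3, M = AᵀA, P = M⊙M, let F, G ∈ ℝ^{n×n} be the fourth-order matrices of A, let σ ≥ 0, 0 ≤ p ≤ 1, μ > 0, and define C = 2p·P² + 2p²·F + 2pσ²·(M²⊙M) + 2σ⁴·((A⊙A)ᵀ(A⊙A) + G). Suppose ‖A‖₂ ≤ √(n/m)·μ, ‖A‖_max ≤ √(n·log(n)/m)·μ, ‖M‖_max ≤ log(n)·μ², ‖F‖₂ ≤ (n²/m²)·log²(n)·μ⁸, and ‖G‖₂ ≤ (n/m)·log(n)·μ⁴. Then ‖C‖₂ ≤ 4p·(n²/m²)·log²(n)·μ⁸ + 2p·(n²/m²)·log(n)·μ⁶·σ² + 4·(n²/m²)·log(n)·μ⁴·σ⁴. -/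
open Matrix

/-- The max-norm of a matrix: the largest absolute value of its entries. -/
noncomputable def maxNorm {m n : ℕ} (A : Matrix (Fin m) (Fin n) ℝ) : ℝ :=
  ⨆ i, ⨆ j, |A i j|

/-- The fourth-order matrix `F(i,j) = Σ_k Σ_{k'≠k} m_{i,k} m_{i,k'} m_{j,k} m_{j,k'}`. -/
def Fmat {n : ℕ} (M : Matrix (Fin n) (Fin n) ℝ) : Matrix (Fin n) (Fin n) ℝ :=
  Matrix.of fun i j =>
    ∑ k, ∑ k' ∈ Finset.univ.erase k, M i k * M i k' * M j k * M j k'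

/-- The fourth-order matrix `G(i,j) = Σ_k Σ_{k'≠k} a_{k,i} a_{k,j} a_{k',i} a_{k',j}`. -/
def Gmat {m n : ℕ} (A : Matrix (Fin m) (Fin n) ℝ) : Matrix (Fin n) (Fin n) ℝ :=
  Matrix.of fun i j =>
    ∑ k, ∑ k' ∈ Finset.univ.erase k, A k i * A k j * A k' i * A k' j

section Helpers

open scoped Matrix.Norms.L2Operator

lemma spec_eq {m n : ℕ} (A : Matrix (Fin m) (Fin n) ℝ) : specNorm A = ‖A‖ := rfl

lemma abs_le_maxNorm {m n : ℕ} (A : Matrix (Fin m) (Fin n) ℝ) (i : Fin m) (j : Fin n) :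
    |A i j| ≤ maxNorm A := by
  unfold maxNorm
  exact (le_ciSup (f := fun j => |A i j|) (Set.finite_range _).bddAbove j).trans
    (le_ciSup (f := fun i => ⨆ j, |A i j|) (Set.finite_range _).bddAbove i)

lemma norm_toLp_eq {n : ℕ} (x : Fin n → ℝ) :
    ‖WithLp.toLp 2 x‖ = Real.sqrt (∑ i, x i ^ 2) := by
  rw [EuclideanSpace.norm_eq]
  simp

lemma bilin_le {n : ℕ} (N : Matrix (Fin n) (Fin n) ℝ) (x y : Fin n → ℝ) :
    x ⬝ᵥ (N *ᵥ y) ≤ ‖N‖ * (‖WithLp.toLp 2 x‖ * ‖WithLp.toLp 2 y‖) := by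
  have h1 := real_inner_le_norm (WithLp.toLp 2 (N *ᵥ y)) (WithLp.toLp 2 x)
  have h2 : ‖WithLp.toLp 2 (N *ᵥ y)‖ ≤ ‖N‖ * ‖WithLp.toLp 2 y‖ :=
    Matrix.l2_opNorm_mulVec N (WithLp.toLp 2 y)
  have h3 : inner ℝ (WithLp.toLp 2 (N *ᵥ y)) (WithLp.toLp 2 x) = x ⬝ᵥ (N *ᵥ y) := by
    rw [EuclideanSpace.inner_toLp_toLp]; simp
  rw [h3] at h1
  calc _ ≤ _ := h1
    _ ≤ (‖N‖ * ‖WithLp.toLp 2 y‖) * ‖WithLp.toLp 2 x‖ := by gcongr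
    _ = _ := by ring

lemma norm_le_of_bilin {n : ℕ} (N : Matrix (Fin n) (Fin n) ℝ) (c : ℝ) (hc : 0 ≤ c)
    (h : ∀ x y : Fin n → ℝ,
      x ⬝ᵥ (N *ᵥ y) ≤ c * (‖WithLp.toLp 2 x‖ * ‖WithLp.toLp 2 y‖)) : ‖N‖ ≤ c := by
  rw [Matrix.l2_opNorm_def]
  refine ContinuousLinearMap.opNorm_le_bound _ hc fun v => ?_
  change ‖WithLp.toLp 2 (N *ᵥ v.ofLp)‖ ≤ c * ‖v‖
  have h1 := h (N *ᵥ v.ofLp) v.ofLp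
  have h3 : (N *ᵥ v.ofLp) ⬝ᵥ (N *ᵥ v.ofLp) = ‖WithLp.toLp 2 (N *ᵥ v.ofLp)‖ ^ 2 := by
    rw [norm_toLp_eq, Real.sq_sqrt (Finset.sum_nonneg fun i _ => sq_nonneg _)]
    simp [dotProduct, sq]
  rw [h3] at h1
  change _ ≤ c * (_ * ‖v‖) at h1
  by_contra! hlt
  have hpos : 0 < ‖WithLp.toLp 2 (N *ᵥ v.ofLp)‖ := lt_of_le_of_lt (by positivity) hlt
  nlinarith

lemma schur_sum {m n : ℕ} (A : Matrix (Fin m) (Fin n) ℝ) (d : ℝ)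
    (hd : ∀ i, (Aᵀ * A) i i ≤ d) (x : Fin n → ℝ) :
    ∑ k, ‖WithLp.toLp 2 (fun i => A k i * x i)‖ ^ 2 ≤ d * ‖WithLp.toLp 2 x‖ ^ 2 := by
  simp only [norm_toLp_eq]
  simp only [Real.sq_sqrt (Finset.sum_nonneg fun i _ => sq_nonneg _)]
  rw [Finset.sum_comm, Finset.mul_sum]
  refine Finset.sum_le_sum fun i _ => ?_
  have := hd i
  rw [Matrix.mul_apply] at this
  calc ∑ k, (A k i * x i) ^ 2 = (∑ k, Aᵀ i k * A k i) * x i ^ 2 := by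
        rw [Finset.sum_mul]
        refine Finset.sum_congr rfl fun k _ => ?_
        rw [Matrix.transpose_apply]; ring
    _ ≤ _ := by gcongr

lemma schur_bound {m n : ℕ} (A : Matrix (Fin m) (Fin n) ℝ) (N : Matrix (Fin n) (Fin n) ℝ)
    (d : ℝ) (hd0 : 0 ≤ d) (hd : ∀ i, (Aᵀ * A) i i ≤ d) :
    ‖Matrix.hadamard N (Aᵀ * A)‖ ≤ ‖N‖ * d := by
  refine norm_le_of_bilin _ _ (by positivity) fun x y => ?_
  have e : x ⬝ᵥ (Matrix.hadamard N (Aᵀ * A) *ᵥ y)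
      = ∑ k, (fun i => A k i * x i) ⬝ᵥ (N *ᵥ (fun i => A k i * y i)) := by
    simp only [dotProduct, Matrix.mulVec, Matrix.hadamard_apply, Matrix.mul_apply,
      Matrix.transpose_apply, Finset.mul_sum, Finset.sum_mul]
    rw [Finset.sum_comm' (t' := Finset.univ) (s' := fun _ => Finset.univ) (by simp)]
    rw [Finset.sum_comm]
    conv_rhs => rw [Finset.sum_comm]
    refine Finset.sum_congr rfl fun i _ => ?_
    conv_rhs => rw [Finset.sum_comm]
    refine Finset.sum_congr rfl fun j _ => ?_
    refine Finset.sum_congr rfl fun k _ => ?_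
    ring
  rw [e]
  have hx := schur_sum A d hd x
  have hy := schur_sum A d hd y
  calc _ ≤ ∑ k, ‖N‖ * (‖WithLp.toLp 2 (fun i => A k i * x i)‖
            * ‖WithLp.toLp 2 (fun i => A k i * y i)‖) :=
        Finset.sum_le_sum fun k _ => bilin_le _ _ _
    _ = ‖N‖ * ∑ k, (‖WithLp.toLp 2 (fun i => A k i * x i)‖
            * ‖WithLp.toLp 2 (fun i => A k i * y i)‖) := by rw [Finset.mul_sum]
    _ ≤ ‖N‖ * (Real.sqrt (d * ‖WithLp.toLp 2 x‖ ^ 2) * Real.sqrt (d * ‖WithLp.toLp 2 y‖ ^ 2)) := by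
        gcongr
        refine (Real.sum_mul_le_sqrt_mul_sqrt _ _ _).trans ?_
        gcongr
    _ = _ := by
        rw [Real.sqrt_mul hd0, Real.sqrt_mul hd0, Real.sqrt_sq (norm_nonneg _),
          Real.sqrt_sq (norm_nonneg _)]
        have := Real.mul_self_sqrt hd0
        linear_combination ‖N‖ * ‖WithLp.toLp 2 x‖ * ‖WithLp.toLp 2 y‖ * this

lemma gram_add_G {m n : ℕ} (A : Matrix (Fin m) (Fin n) ℝ) :
    (Matrix.hadamard A A)ᵀ * (Matrix.hadamard A A) + Gmat A
      = Matrix.hadamard (Aᵀ * A) (Aᵀ * A) := by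
  ext i j
  simp only [Matrix.add_apply, Matrix.mul_apply, Matrix.hadamard_apply, Matrix.transpose_apply,
    Gmat, Matrix.of_apply, Finset.sum_mul_sum]
  rw [← Finset.sum_add_distrib]
  refine Finset.sum_congr rfl fun k _ => ?_
  rw [← Finset.add_sum_erase _ _ (Finset.mem_univ k)]
  congr 1
  · ring
  · refine Finset.sum_congr rfl fun l _ => ?_
    ring

theorem C_norm_bound_aux
    {m n : ℕ} (hm : 0 < m) (hmn : m ≤ n) (hn : 3 ≤ n)
    (A : Matrix (Fin m) (Fin n) ℝ)
    (M P : Matrix (Fin n) (Fin n) ℝ) (hM : M = Aᵀ * A) (hP : P = Matrix.hadamard M M)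
    (σ : ℝ) (hσ : 0 ≤ σ) (p : ℝ) (hp0 : 0 ≤ p) (hp1 : p ≤ 1)
    (μ : ℝ) (hμ : 0 < μ)
    (C : Matrix (Fin n) (Fin n) ℝ)
    (hC : C = (2 * p) • (P * P) + (2 * p ^ 2) • Fmat M
        + (2 * p * σ ^ 2) • Matrix.hadamard (M * M) M
        + (2 * σ ^ 4) • ((Matrix.hadamard A A)ᵀ * (Matrix.hadamard A A) + Gmat A))
    (hA2 : specNorm A ≤ Real.sqrt ((n : ℝ) / m) * μ)
    (hAmax : maxNorm A ≤ Real.sqrt ((n : ℝ) * Real.log n / m) * μ)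
    (hMmax : maxNorm M ≤ Real.log n * μ ^ 2)
    (hF : specNorm (Fmat M) ≤ (n : ℝ) ^ 2 / (m : ℝ) ^ 2 * Real.log n ^ 2 * μ ^ 8)
    (hG : specNorm (Gmat A) ≤ (n : ℝ) / m * Real.log n * μ ^ 4) :
    specNorm C ≤ 4 * p * ((n : ℝ) ^ 2 / (m : ℝ) ^ 2) * Real.log n ^ 2 * μ ^ 8
      + 2 * p * ((n : ℝ) ^ 2 / (m : ℝ) ^ 2) * Real.log n * μ ^ 6 * σ ^ 2
      + 4 * ((n : ℝ) ^ 2 / (m : ℝ) ^ 2) * Real.log n * μ ^ 4 * σ ^ 4 := by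
  simp only [spec_eq] at hA2 hF hG ⊢
  have hmR : (0 : ℝ) < m := by exact_mod_cast hm
  have hmnR : (m : ℝ) ≤ n := by exact_mod_cast hmn
  have hr1 : 1 ≤ (n : ℝ) / m := (one_le_div hmR).2 hmnR
  have hL : 0 ≤ Real.log n := Real.log_natCast_nonneg n
  have er : (n : ℝ) ^ 2 / (m : ℝ) ^ 2 = ((n : ℝ) / m) ^ 2 := (div_pow _ _ _).symm
  rw [er] at hF ⊢
  generalize (n : ℝ) / m = r at *
  generalize Real.log n = L at *
  have hr0 : 0 ≤ r := by linarith
  have hMn : ‖M‖ ≤ r * μ ^ 2 := by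
    have h := Matrix.l2_opNorm_conjTranspose_mul_self A
    rw [Matrix.conjTranspose_eq_transpose_of_trivial, ← hM] at h
    rw [h]
    calc ‖A‖ * ‖A‖ ≤ (Real.sqrt r * μ) * (Real.sqrt r * μ) := by gcongr
      _ = (Real.sqrt r * Real.sqrt r) * μ ^ 2 := by ring
      _ = _ := by rw [Real.mul_self_sqrt hr0]
  have hd0 : 0 ≤ L * μ ^ 2 := by positivity
  have hd : ∀ i, (Aᵀ * A) i i ≤ L * μ ^ 2 := fun i => by
    rw [← hM]
    exact (le_abs_self _).trans ((abs_le_maxNorm M i i).trans hMmax)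
  have hPn : ‖P‖ ≤ r * L * μ ^ 4 := by
    have h := schur_bound A M _ hd0 hd
    rw [← hM, ← hP] at h
    calc _ ≤ _ := h
      _ ≤ (r * μ ^ 2) * (L * μ ^ 2) := by gcongr
      _ = _ := by ring
  have hPP : ‖P * P‖ ≤ r ^ 2 * L ^ 2 * μ ^ 8 := by
    calc _ ≤ ‖P‖ * ‖P‖ := Matrix.l2_opNorm_mul _ _
      _ ≤ (r * L * μ ^ 4) * (r * L * μ ^ 4) := by gcongr
      _ = _ := by ring
  have hMM : ‖Matrix.hadamard (M * M) M‖ ≤ r ^ 2 * L * μ ^ 6 := by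
    have h := schur_bound A (M * M) _ hd0 hd
    rw [← hM] at h
    calc _ ≤ _ := h
      _ ≤ (‖M‖ * ‖M‖) * (L * μ ^ 2) := by gcongr; exact Matrix.l2_opNorm_mul _ _
      _ ≤ ((r * μ ^ 2) * (r * μ ^ 2)) * (L * μ ^ 2) := by gcongr
      _ = _ := by ring
  rw [gram_add_G, ← hM, ← hP] at hC
  rw [hC]
  have hp2 : p ^ 2 ≤ p := by nlinarith
  calc _ ≤ ‖(2 * p) • (P * P)‖ + ‖(2 * p ^ 2) • Fmat M‖
        + ‖(2 * p * σ ^ 2) • Matrix.hadamard (M * M) M‖ + ‖(2 * σ ^ 4) • P‖ := norm_add₄_le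
    _ = (2 * p) * ‖P * P‖ + (2 * p ^ 2) * ‖Fmat M‖
        + (2 * p * σ ^ 2) * ‖Matrix.hadamard (M * M) M‖ + (2 * σ ^ 4) * ‖P‖ := by
      simp only [norm_smul, Real.norm_eq_abs]
      rw [abs_of_nonneg (by positivity : 0 ≤ 2 * p), abs_of_nonneg (by positivity : 0 ≤ 2 * p ^ 2),
        abs_of_nonneg (by positivity : 0 ≤ 2 * p * σ ^ 2),
        abs_of_nonneg (by positivity : 0 ≤ 2 * σ ^ 4)]
    _ ≤ (2 * p) * (r ^ 2 * L ^ 2 * μ ^ 8) + (2 * p) * (r ^ 2 * L ^ 2 * μ ^ 8)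
        + (2 * p * σ ^ 2) * (r ^ 2 * L * μ ^ 6) + (4 * σ ^ 4) * (r ^ 2 * L * μ ^ 4) := by
      have hrr : r ≤ r ^ 2 := by nlinarith
      have hP2 : ‖P‖ ≤ r ^ 2 * L * μ ^ 4 := hPn.trans (by gcongr)
      gcongr
      norm_num
    _ = _ := by ring

end Helpers

/-- spectral-norm bound on the block-structure-independent matrix `C` of
the covariance decomposition, under the (μ,ν)-coherence bounds on `A`. -/
theorem C_norm_bound
    {m n : ℕ} (hm : 0 < m) (hmn : m ≤ n) (hn : 3 ≤ n)
    (A : Matrix (Fin m) (Fin n) ℝ)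
    (M P : Matrix (Fin n) (Fin n) ℝ) (hM : M = Aᵀ * A) (hP : P = Matrix.hadamard M M)
    (σ : ℝ) (hσ : 0 ≤ σ) (p : ℝ) (hp0 : 0 ≤ p) (hp1 : p ≤ 1)
    (μ : ℝ) (hμ : 0 < μ)
    (C : Matrix (Fin n) (Fin n) ℝ)
    (hC : C = (2 * p) • (P * P) + (2 * p ^ 2) • Fmat M
        + (2 * p * σ ^ 2) • Matrix.hadamard (M * M) M
        + (2 * σ ^ 4) • ((Matrix.hadamard A A)ᵀ * (Matrix.hadamard A A) + Gmat A))
    (hA2 : specNorm A ≤ Real.sqrt ((n : ℝ) / m) * μ)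
    (hAmax : maxNorm A ≤ Real.sqrt ((n : ℝ) * Real.log n / m) * μ)
    (hMmax : maxNorm M ≤ Real.log n * μ ^ 2)
    (hF : specNorm (Fmat M) ≤ (n : ℝ) ^ 2 / (m : ℝ) ^ 2 * Real.log n ^ 2 * μ ^ 8)
    (hG : specNorm (Gmat A) ≤ (n : ℝ) / m * Real.log n * μ ^ 4) :
    specNorm C ≤ 4 * p * ((n : ℝ) ^ 2 / (m : ℝ) ^ 2) * Real.log n ^ 2 * μ ^ 8
      + 2 * p * ((n : ℝ) ^ 2 / (m : ℝ) ^ 2) * Real.log n * μ ^ 6 * σ ^ 2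
      + 4 * ((n : ℝ) ^ 2 / (m : ℝ) ^ 2) * Real.log n * μ ^ 4 * σ ^ 4 := by
  exact C_norm_bound_aux hm hmn hn A M P hM hP σ hσ p hp0 hp1 μ hμ C hC hA2 hAmax hMmax hF hG
end
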